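/- Let R be a commutative noetherian ring, p a prime ideal, and k an integer with 0 < k ≤ depth(R_p). Then: (1) the Koszul cocycle module S_k(pR_p; R_p) has flat dimension exactly k as an R-module and projective dimension exactly k as an R_p-module; (2) its character dual S_k(pR_p; R_p)^+ = Hom_ℤ(S_k(pR_p; R_p), ℚ/ℤ) and its Matlis dual Hom_{R_p}(S_k(pR_p; R_p), E(R_p/pR_p)) are both pure-injective modules of injective dimension exactly k, and the Tor-orthogonal class {M : Tor^R_j(S_k(pR_p; R_p), M) = 0 for all j ≥ 1} coincides with {}^⊥(S_k(pR_p; R_p)^+) and with {}^⊥(Hom_{R_p}(S_k(pR_p; R_p), E(R_p/pR_p))). -/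

import Mathlib

open CategoryTheory Opposite

noncomputable section

/-- Vanishing of the `n`-th Ext group of two `R`-modules. -/
def extV (R : Type) [Ring R] (M N : ModuleCat.{0} R) (n : ℕ) : Prop :=
  Subsingleton (((_root_.Ext ℤ (ModuleCat.{0} R) n).obj (op M)).obj N)

/-- Vanishing of the `n`-th Tor group of two `R`-modules. -/
def torV (R : Type) [CommRing R] (M N : ModuleCat.{0} R) (n : ℕ) : Prop :=
  Subsingleton (((Tor (ModuleCat.{0} R) n).obj M).obj N)

/-- `f : A →ₗ[R] B` is a pure monomorphism. -/
def IsPureMono (R : Type) [CommRing R] {A B : Type} [AddCommGroup A] [Module R A]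
    [AddCommGroup B] [Module R B] (f : A →ₗ[R] B) : Prop :=
  Function.Injective f ∧
    ∀ (Q : Type) [AddCommGroup Q] [Module R Q], Function.Injective (LinearMap.lTensor Q f)

/-- An `R`-module `N` is pure-injective if it is injective with respect to
pure monomorphisms. -/
def PureInjective (R : Type) [CommRing R] (N : Type) [AddCommGroup N] [Module R N] : Prop :=
  ∀ (A B : Type) [AddCommGroup A] [Module R A] [AddCommGroup B] [Module R B]
    (f : A →ₗ[R] B), IsPureMono R f → ∀ g : A →ₗ[R] N, ∃ h : B →ₗ[R] N, h.comp f = g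

/-- `N` has injective dimension at most `n`. -/
def injDimLE (R : Type) [Ring R] (N : ModuleCat.{0} R) (n : ℕ) : Prop :=
  ∀ M : ModuleCat.{0} R, ∀ j : ℕ, n < j → extV R M N j

/-- `M` has projective dimension at most `n`. -/
def projDimLE (R : Type) [Ring R] (M : ModuleCat.{0} R) (n : ℕ) : Prop :=
  ∀ N : ModuleCat.{0} R, ∀ j : ℕ, n < j → extV R M N j

/-- `M` has flat dimension at most `n`. -/
def flatDimLE (R : Type) [CommRing R] (M : ModuleCat.{0} R) (n : ℕ) : Prop :=
  ∀ N : ModuleCat.{0} R, ∀ j : ℕ, n < j → torV R M N j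

/-- The depth of a module over a commutative local ring. -/
def rdepth (A : Type) [CommRing A] [IsLocalRing A] (M : Type) [AddCommGroup M]
    [Module A M] : ℕ∞ :=
  sInf {n : ℕ∞ | ∃ i : ℕ, n = (i : ℕ∞) ∧
    ¬ extV A (ModuleCat.of A (IsLocalRing.ResidueField A)) (ModuleCat.of A M) i}

/-- `depth(R_p)`. -/
def ringDepthAt (R : Type) [CommRing R] (p : PrimeSpectrum R) : ℕ∞ :=
  rdepth (Localization.AtPrime p.asIdeal) (Localization.AtPrime p.asIdeal)

/-- `depth_{R_p}(M_p)`. -/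
def depthAt (R : Type) [CommRing R] (p : PrimeSpectrum R) (M : Type) [AddCommGroup M]
    [Module R M] : ℕ∞ :=
  rdepth (Localization.AtPrime p.asIdeal) (LocalizedModule p.asIdeal.primeCompl M)

/-- `f : M →ₗ[R] E` exhibits `E` as an injective envelope of `M`. -/
def IsInjectiveEnvelope (R : Type) [Ring R] {M E : Type} [AddCommGroup M] [Module R M]
    [AddCommGroup E] [Module R E] (f : M →ₗ[R] E) : Prop :=
  Module.Injective R E ∧ Function.Injective f ∧
    ∀ K : Submodule R E, K ≠ ⊥ → K ⊓ LinearMap.range f ≠ ⊥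

/-- The degree-`i` term of the Koszul cochain complex on `ℓ` generators over `A`:
a free module on the `i`-element subsets of `Fin ℓ`. -/
abbrev KosTerm (A : Type) [CommRing A] (ℓ i : ℕ) : Type :=
  {s : Finset (Fin ℓ) // s.card = i} → A

/-- The Koszul cochain differential (for the sequence `x`), from degree `i`
to degree `i+1`. -/
def kosD (A : Type) [CommRing A] {ℓ : ℕ} (x : Fin ℓ → A) (i : ℕ) :
    KosTerm A ℓ i →ₗ[A] KosTerm A ℓ (i + 1) where
  toFun f T := ∑ t ∈ T.1.attach,
    ((-1 : A) ^ ((T.1.filter (fun s => s < t.1)).card) * x t.1) •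
      f ⟨T.1.erase t.1, by
        rw [Finset.card_erase_of_mem t.2, T.2]; omega⟩
  map_add' f g := by
    funext T
    simp [mul_add, Finset.sum_add_distrib]
  map_smul' a f := by
    funext T
    rw [RingHom.id_apply]
    simp only [Pi.smul_apply, smul_eq_mul, Finset.mul_sum]
    exact Finset.sum_congr rfl fun t _ => by ring

/-- `S_k(x; A)`: the cokernel of the `(k-1)`-st differential of the Koszul cochain
complex of the sequence `x` (with `S_0 = A`). -/
def KosCoker (A : Type) [CommRing A] {ℓ : ℕ} (x : Fin ℓ → A) : ℕ → Type
  | 0 => A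
  | m + 1 => KosTerm A ℓ (m + 1) ⧸ LinearMap.range (kosD A x m)

instance kosCokerAddCommGroup (A : Type) [CommRing A] {ℓ : ℕ} (x : Fin ℓ → A) :
    (k : ℕ) → AddCommGroup (KosCoker A x k)
  | 0 => inferInstanceAs (AddCommGroup A)
  | m + 1 => inferInstanceAs
      (AddCommGroup (KosTerm A ℓ (m + 1) ⧸ LinearMap.range (kosD A x m)))

instance kosCokerModule (A : Type) [CommRing A] {ℓ : ℕ} (x : Fin ℓ → A) :
    (k : ℕ) → Module A (KosCoker A x k)
  | 0 => inferInstanceAs (Module A A)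
  | m + 1 => inferInstanceAs
      (Module A (KosTerm A ℓ (m + 1) ⧸ LinearMap.range (kosD A x m)))

/-- The `R`-module structure on `S_k(x; A)` obtained by restriction of scalars. -/
instance kosCokerModule' (R A : Type) [CommRing R] [CommRing A] [Algebra R A]
    {ℓ : ℕ} (x : Fin ℓ → A) (k : ℕ) : Module R (KosCoker A x k) :=
  Module.compHom _ (algebraMap R A)

/-- Mathlib's `RestrictScalars.module` on `Hom_{R_p}(S_k(x; R_p), E)`, stated over the additive
group structure of `RestrictScalars`. -/
instance kosCokerHomModule (R : Type) [CommRing R] (p : PrimeSpectrum R) {ℓ : ℕ}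
    (x : Fin ℓ → Localization.AtPrime p.asIdeal) (k : ℕ) (E : Type) [AddCommGroup E]
    [Module (Localization.AtPrime p.asIdeal) E] :
    @Module R (RestrictScalars R (Localization.AtPrime p.asIdeal)
      ((KosCoker (Localization.AtPrime p.asIdeal) x k) →ₗ[Localization.AtPrime p.asIdeal] E))
      _ AddCommGroup.toAddCommMonoid :=
  (RestrictScalars.module R (Localization.AtPrime p.asIdeal) _ : Module R (RestrictScalars R (Localization.AtPrime p.asIdeal)
    ((KosCoker (Localization.AtPrime p.asIdeal) x k) →ₗ[Localization.AtPrime p.asIdeal] E)))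

/-!
Contraction with the `t`-th dual basis vector is a homotopy on the Koszul complex between `x_t` and
`0`, so the ideal `J` generated by `x` kills the kernel of the induced map `S_i → K^{i+1}`. If
`Ext^j(A/J, A) = 0` for `j < k`, then dimension shifting along `0 → S_i → K^{i+1} → S_{i+1} → 0`
gives `Hom(A/J, S_i) = 0`, hence the exactness of these sequences, for all `i < k`. Their middle
terms are free over `A` and flat over `R`, so each step raises the projective and the flat dimension
by one, once `S_1` is known not to be flat: otherwise `A = S_0 → K^1` would be pure, although its
image lies in `J K^1`. If `N` is the character dual or the Matlis dual of `S`, then `Hom(-, N)`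
and `S ⊗ -` have the same exact sequences; this turns Tor into Ext, and flat dimension into
injective dimension.
-/

/-! ### The Koszul complex and its contracting homotopies -/

/-- Koszul cochains of all degrees on generators indexed by `ι`: a family of coefficients on the
monomials `e_T`, where `e_T` is the wedge of the `e_t`, `t ∈ T`, in increasing order. -/
abbrev KoszulCochain (A ι : Type*) : Type _ :=
  Finset ι → A

namespace KoszulCochain

variable (A : Type*) [CommRing A] {ι : Type*} [LinearOrder ι]

/-- The sign in `e_t ∧ e_{T \ t} = ± e_T`. -/
def sign (T : Finset ι) (t : ι) : A :=
  (-1) ^ (T.filter (· < t)).card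

variable {A} in
lemma sign_insert {T : Finset ι} {s : ι} (hs : s ∉ T) (t : ι) :
    sign A (insert s T) t = if s < t then -sign A T t else sign A T t := by
  split_ifs with hst
  · rw [sign, Finset.filter_insert, if_pos hst,
      Finset.card_insert_of_notMem (by simp [hs]), pow_succ, mul_neg_one, sign]
  · rw [sign, Finset.filter_insert, if_neg hst, sign]

lemma sign_mul_self (T : Finset ι) (t : ι) : sign A T t * sign A T t = 1 := by
  rw [sign, ← mul_pow, neg_one_mul, neg_neg, one_pow]

/-- Exterior multiplication by the generator `e_t`. -/
def wedge (t : ι) : Module.End A (KoszulCochain A ι) where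
  toFun F T := if t ∈ T then sign A T t * F (T.erase t) else 0
  map_add' F G := by
    ext T
    simp only [Pi.add_apply, mul_add]
    split_ifs <;> simp
  map_smul' a F := by
    ext T
    simp [mul_left_comm]

/-- Contraction with the `t`-th vector of the dual basis. -/
def contract (t : ι) : Module.End A (KoszulCochain A ι) where
  toFun F T := if t ∈ T then 0 else sign A T t * F (insert t T)
  map_add' F G := by
    ext T
    simp only [Pi.add_apply, mul_add]
    split_ifs <;> simp
  map_smul' a F := by
    ext T
    simp [mul_left_comm]

variable {A}

lemma wedge_apply_insert {T : Finset ι} {t : ι} (ht : t ∉ T) (F : KoszulCochain A ι) :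
    wedge A t F (insert t T) = sign A T t * F T := by
  simp [wedge, sign_insert ht, Finset.erase_insert ht]

lemma wedge_apply_of_notMem {T : Finset ι} {t : ι} (ht : t ∉ T) (F : KoszulCochain A ι) :
    wedge A t F T = 0 :=
  if_neg ht

lemma contract_apply_of_notMem {T : Finset ι} {t : ι} (ht : t ∉ T) (F : KoszulCochain A ι) :
    contract A t F T = sign A T t * F (insert t T) :=
  if_neg ht

lemma contract_apply_of_mem {T : Finset ι} {t : ι} (ht : t ∈ T) (F : KoszulCochain A ι) :
    contract A t F T = 0 :=
  if_pos ht

lemma wedge_mul_self (t : ι) : wedge A t * wedge A t = 0 := by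
  ext F T
  by_cases ht : t ∈ T
  · simp [wedge]
  · exact wedge_apply_of_notMem ht _

variable (A) in
lemma sign_insert_swap {T : Finset ι} {s t : ι} (hs : s ∉ T) (ht : t ∉ T) (hst : s ≠ t) :
    sign A (insert s T) t = -sign A T t ∧ sign A (insert t T) s = sign A T s ∨
      sign A (insert s T) t = sign A T t ∧ sign A (insert t T) s = -sign A T s := by
  rw [sign_insert hs, sign_insert ht]
  rcases lt_or_gt_of_ne hst with h | h <;> simp [h, h.asymm]

lemma wedge_mul_wedge_add (s t : ι) : wedge A s * wedge A t + wedge A t * wedge A s = 0 := by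
  rcases eq_or_ne s t with rfl | hst
  · rw [wedge_mul_self, add_zero]
  ext F T
  change wedge A s (wedge A t F) T + wedge A t (wedge A s F) T = 0
  by_cases hT : s ∈ T ∧ t ∈ T
  · obtain ⟨U, hs, ht, rfl⟩ : ∃ U, s ∉ U ∧ t ∉ U ∧ insert s (insert t U) = T :=
      ⟨(T.erase s).erase t, by simp, by simp,
        by rw [Finset.insert_erase (by simp [hst.symm, hT]), Finset.insert_erase hT.1]⟩
    rw [wedge_apply_insert (by simp [hst, hs]), wedge_apply_insert ht, Finset.insert_comm,
      wedge_apply_insert (by simp [hst.symm, ht]), wedge_apply_insert hs]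
    rcases sign_insert_swap A hs ht hst with ⟨h₁, h₂⟩ | ⟨h₁, h₂⟩ <;> rw [h₁, h₂] <;> ring
  · rcases not_and_or.1 hT with h | h <;> simp [wedge, h]

lemma wedge_mul_contract_add_of_ne {s t : ι} (hst : s ≠ t) :
    wedge A s * contract A t + contract A t * wedge A s = 0 := by
  ext F T
  change wedge A s (contract A t F) T + contract A t (wedge A s F) T = 0
  by_cases hT : s ∈ T ∧ t ∉ T
  · obtain ⟨U, hs, rfl⟩ : ∃ U, s ∉ U ∧ insert s U = T :=
      ⟨T.erase s, by simp, Finset.insert_erase hT.1⟩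
    have ht : t ∉ U := fun h => hT.2 (Finset.mem_insert_of_mem h)
    rw [wedge_apply_insert hs, contract_apply_of_notMem ht, contract_apply_of_notMem hT.2,
      Finset.insert_comm, wedge_apply_insert (by simp [hst, hs])]
    rcases sign_insert_swap A hs ht hst with ⟨h₁, h₂⟩ | ⟨h₁, h₂⟩ <;> rw [h₁, h₂] <;> ring
  · rcases not_and_or.1 hT with h | h
    · simp [wedge, contract, h, hst]
    · simp [wedge, contract, not_not.1 h, hst.symm]

lemma wedge_mul_contract_add_self (t : ι) :
    wedge A t * contract A t + contract A t * wedge A t = 1 := by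
  ext F T
  change wedge A t (contract A t F) T + contract A t (wedge A t F) T = F T
  by_cases hT : t ∈ T
  · obtain ⟨U, ht, rfl⟩ : ∃ U, t ∉ U ∧ insert t U = T :=
      ⟨T.erase t, by simp, Finset.insert_erase hT⟩
    rw [wedge_apply_insert ht, contract_apply_of_notMem ht, contract_apply_of_mem hT, ← mul_assoc,
      sign_mul_self, one_mul, add_zero]
  · rw [wedge_apply_of_notMem hT, contract_apply_of_notMem hT, wedge_apply_insert hT, ← mul_assoc,
      sign_mul_self, one_mul, zero_add]

variable [Fintype ι]

/-- Exterior multiplication by `∑ x_t e_t`, the Koszul differential of the sequence `x`. -/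
def d (x : ι → A) : Module.End A (KoszulCochain A ι) :=
  ∑ t, x t • wedge A t

lemma d_apply (x : ι → A) (F : KoszulCochain A ι) (T : Finset ι) :
    d x F T = ∑ t ∈ T, sign A T t * x t * F (T.erase t) := by
  simp [d, wedge, mul_left_comm, mul_assoc]

lemma d_mul_d (x : ι → A) : d x * d x = 0 := by
  have anticomm (s t : ι) :
      x s • wedge A s * x t • wedge A t + x t • wedge A t * x s • wedge A s = 0 := by
    rw [smul_mul_smul_comm, smul_mul_smul_comm, mul_comm (x t), ← smul_add, wedge_mul_wedge_add,
      smul_zero]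
  rw [d, Finset.sum_mul_sum, ← Finset.sum_product']
  refine Finset.sum_involution (fun st _ => st.swap) (fun st _ => anticomm st.1 st.2)
    (fun st _ hne heq => hne ?_) (fun _ _ => Finset.mem_product.2 (by simp)) (fun _ _ => rfl)
  have hst : st.2 = st.1 := congrArg Prod.fst heq
  rw [hst, smul_mul_smul_comm, wedge_mul_self, smul_zero]

lemma d_mul_contract_add (x : ι → A) (t : ι) :
    d x * contract A t + contract A t * d x = x t • 1 := by
  rw [d, Finset.sum_mul, Finset.mul_sum, ← Finset.sum_add_distrib,
    Finset.sum_eq_single_of_mem t (Finset.mem_univ t)]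
  · rw [smul_mul_assoc, mul_smul_comm, ← smul_add, wedge_mul_contract_add_self]
  · intro s _ hst
    rw [smul_mul_assoc, mul_smul_comm, ← smul_add, wedge_mul_contract_add_of_ne hst, smul_zero]

lemma d_contract_of_d_eq_zero {x : ι → A} {F : KoszulCochain A ι} (hF : d x F = 0) (t : ι) :
    d x (contract A t F) = x t • F := by
  simpa [hF] using LinearMap.congr_fun (d_mul_contract_add x t) F

end KoszulCochain

namespace KosTerm
variable {A : Type} [CommRing A] {ℓ i : ℕ}

/-- The inclusion of the Koszul cochains of degree `i` into those of all degrees. -/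
def toCochain (i : ℕ) : KosTerm A ℓ i →ₗ[A] KoszulCochain A (Fin ℓ) :=
  Function.ExtendByZero.linearMap A Subtype.val

lemma toCochain_val (f : KosTerm A ℓ i) (T : {s : Finset (Fin ℓ) // s.card = i}) :
    toCochain i f T = f T :=
  Subtype.val_injective.extend_apply f 0 T

lemma toCochain_of_card_ne (f : KosTerm A ℓ i) {T : Finset (Fin ℓ)} (hT : T.card ≠ i) :
    toCochain i f T = 0 :=
  Function.extend_apply' _ _ _ fun ⟨S, hS⟩ => hT (hS ▸ S.2)

lemma toCochain_injective : Function.Injective (toCochain i : KosTerm A ℓ i →ₗ[A] _) :=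
  Function.extend_injective Subtype.val_injective (0 : Finset (Fin ℓ) → A)

lemma exists_toCochain_eq {F : KoszulCochain A (Fin ℓ)} (hF : ∀ T, T.card ≠ i → F T = 0) :
    ∃ f : KosTerm A ℓ i, toCochain i f = F := by
  refine ⟨fun T => F T, funext fun T => ?_⟩
  by_cases hT : T.card = i
  · exact toCochain_val _ ⟨T, hT⟩
  · rw [toCochain_of_card_ne _ hT, hF T hT]

lemma toCochain_kosD (x : Fin ℓ → A) (f : KosTerm A ℓ i) :
    toCochain (i + 1) (kosD A x i f) = KoszulCochain.d x (toCochain i f) := by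
  funext T
  rw [KoszulCochain.d_apply]
  by_cases hT : T.card = i + 1
  · rw [← Finset.sum_attach]
    refine (toCochain_val _ ⟨T, hT⟩).trans (Finset.sum_congr rfl fun t _ => ?_)
    exact congrArg _ (toCochain_val f ⟨T.erase t, by grind⟩).symm
  · rw [toCochain_of_card_ne _ hT]
    refine (Finset.sum_eq_zero fun t ht => ?_).symm
    rw [toCochain_of_card_ne _ fun h => hT (by rw [← h, Finset.card_erase_add_one ht]), mul_zero]

lemma kosD_kosD (x : Fin ℓ → A) (f : KosTerm A ℓ i) : kosD A x (i + 1) (kosD A x i f) = 0 := by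
  apply toCochain_injective
  rw [toCochain_kosD, toCochain_kosD, map_zero]
  exact LinearMap.congr_fun (KoszulCochain.d_mul_d x) _

lemma smul_eq_zero_of_kosD_eq_zero {x : Fin ℓ → A} {f : KosTerm A ℓ 0} (hf : kosD A x 0 f = 0)
    (t : Fin ℓ) : x t • f = 0 := by
  have hcontract : KoszulCochain.contract A t (toCochain 0 f) = 0 := by
    funext T
    simp [KoszulCochain.contract, toCochain_of_card_ne]
  apply toCochain_injective
  rw [map_smul, ← KoszulCochain.d_contract_of_d_eq_zero (by rw [← toCochain_kosD, hf, map_zero]),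
    hcontract, map_zero, map_zero]

lemma smul_mem_range_kosD {x : Fin ℓ → A} {f : KosTerm A ℓ (i + 1)}
    (hf : kosD A x (i + 1) f = 0) (t : Fin ℓ) : x t • f ∈ LinearMap.range (kosD A x i) := by
  obtain ⟨g, hg⟩ : ∃ g : KosTerm A ℓ i,
      toCochain i g = KoszulCochain.contract A t (toCochain (i + 1) f) := by
    refine exists_toCochain_eq fun T hT => ?_
    by_cases ht : t ∈ T
    · exact KoszulCochain.contract_apply_of_mem ht _
    · rw [KoszulCochain.contract_apply_of_notMem ht, toCochain_of_card_ne, mul_zero]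
      rwa [Finset.card_insert_of_notMem ht, Ne, Nat.add_right_cancel_iff]
  refine ⟨g, toCochain_injective ?_⟩
  rw [toCochain_kosD, hg, KoszulCochain.d_contract_of_d_eq_zero, map_smul]
  rw [← toCochain_kosD, hf, map_zero]

lemma kosD_apply_mem (x : Fin ℓ → A) (f : KosTerm A ℓ i)
    (T : {s : Finset (Fin ℓ) // s.card = i + 1}) :
    kosD A x i f T ∈ Ideal.span (Set.range x) :=
  Ideal.sum_mem _ fun t _ => Ideal.mul_mem_right _ _ <|
    Ideal.mul_mem_left _ _ (Ideal.subset_span (Set.mem_range_self t.1))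

end KosTerm

namespace KosCoker

variable {A : Type} [CommRing A] {ℓ : ℕ} (x : Fin ℓ → A)

/-- The canonical projection `K^i → S_i`; in degree `0` it is the identification of `K^0`, the
functions on `{∅}`, with `A`. -/
def mk : (i : ℕ) → KosTerm A ℓ i →ₗ[A] KosCoker A x i
  | 0 => (LinearMap.proj ⟨∅, rfl⟩ : KosTerm A ℓ 0 →ₗ[A] A)
  | i + 1 => (LinearMap.range (kosD A x i)).mkQ

lemma mk_surjective (i : ℕ) : Function.Surjective (mk x i) := by
  cases i with
  | zero => exact fun a => ⟨fun _ => a, rfl⟩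
  | succ i => exact Submodule.mkQ_surjective _

/-- The map `S_i → K^{i+1}` induced by the Koszul differential. -/
def d : (i : ℕ) → KosCoker A x i →ₗ[A] KosTerm A ℓ (i + 1)
  | 0 => kosD A x 0 ∘ₗ (LinearMap.pi fun _ => LinearMap.id : A →ₗ[A] KosTerm A ℓ 0)
  | i + 1 => (LinearMap.range (kosD A x i)).liftQ (kosD A x (i + 1)) <| by
      rintro _ ⟨f, rfl⟩
      exact KosTerm.kosD_kosD x f

lemma d_mk (i : ℕ) (f : KosTerm A ℓ i) : d x i (mk x i f) = kosD A x i f := by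
  cases i with
  | zero =>
    refine congrArg (kosD A x 0) (funext fun T => ?_)
    exact congrArg f (Subtype.ext (Finset.card_eq_zero.1 T.2).symm)
  | succ i => rfl

lemma exact_d_mk (i : ℕ) : Function.Exact (d x i) (mk x (i + 1)) := by
  have hrange : LinearMap.range (d x i) = LinearMap.range (kosD A x i) := by
    rw [← LinearMap.range_comp_of_range_eq_top _ (LinearMap.range_eq_top.2 (mk_surjective x i))]
    exact congrArg LinearMap.range (LinearMap.ext (d_mk x i))
  rw [LinearMap.exact_iff, hrange]
  exact Submodule.ker_mkQ _

lemma d_apply_mem (i : ℕ) (s : KosCoker A x i) (T : {s : Finset (Fin ℓ) // s.card = i + 1}) :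
    d x i s T ∈ Ideal.span (Set.range x) := by
  obtain ⟨f, rfl⟩ := mk_surjective x i s
  rw [d_mk]
  exact KosTerm.kosD_apply_mem x f T

variable {x}

lemma smul_eq_zero_of_d_eq_zero {i : ℕ} {s : KosCoker A x i} (hs : d x i s = 0) {a : A}
    (ha : a ∈ Ideal.span (Set.range x)) : a • s = 0 := by
  suffices Ideal.span (Set.range x) ≤ LinearMap.ker (LinearMap.toSpanSingleton A _ s) from this ha
  refine Ideal.span_le.2 ?_
  rintro _ ⟨t, rfl⟩
  obtain ⟨f, rfl⟩ := mk_surjective x i s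
  rw [d_mk] at hs
  change x t • mk x i f = 0
  rw [← map_smul]
  cases i with
  | zero => rw [KosTerm.smul_eq_zero_of_kosD_eq_zero hs, map_zero]
  | succ i => exact (Submodule.Quotient.mk_eq_zero _).2 (KosTerm.smul_mem_range_kosD hs t)

end KosCoker

/-! ### Vanishing of Ext and homological dimensions -/

section
variable {R : Type} [Ring R]

lemma extV_iff_of_projectiveResolution {M : ModuleCat.{0} R} (N : ModuleCat.{0} R)
    (P : ProjectiveResolution M) (n : ℕ) :
    extV R M N n ↔ ∀ f : P.complex.X n ⟶ N, P.complex.d (n + 1) n ≫ f = 0 →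
      ∃ g : P.complex.X (n - 1) ⟶ N, P.complex.d n (n - 1) ≫ g = f := by
  unfold extV
  rw [← ModuleCat.isZero_iff_subsingleton, (P.isoExt (R := ℤ) n N).isZero_iff,
    ← HomologicalComplex.exactAt_iff_isZero_homology,
    HomologicalComplex.exactAt_iff' _ (n - 1) n (n + 1) (by cases n <;> simp) (by simp),
    ShortComplex.moduleCat_exact_iff]
  rfl

lemma extV_zero_iff_subsingleton_hom (M N : ModuleCat.{0} R) :
    extV R M N 0 ↔ Subsingleton (M ⟶ N) := by
  let P := projectiveResolution M
  have hd : P.complex.d 0 0 = 0 := P.complex.shape _ _ (by simp)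
  rw [extV_iff_of_projectiveResolution N P, subsingleton_iff_forall_eq 0]
  refine ⟨fun h f => ?_, fun h f hf => ?_⟩
  · obtain ⟨g, hg⟩ := h (P.π.f 0 ≫ f)
      ((P.complex_d_comp_π_f_zero_assoc _).trans Limits.zero_comp)
    have hf : P.π.f 0 ≫ f = 0 := by
      rw [← hg, hd]
      exact Limits.zero_comp
    exact (cancel_epi (P.π.f 0)).1 (hf.trans Limits.comp_zero.symm)
  · refine ⟨0, ?_⟩
    rw [← P.exact₀.g_desc f hf, h (P.exact₀.desc f hf), Limits.comp_zero]
    exact Limits.comp_zero.symm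

lemma extV_iff_subsingleton_ext (M N : ModuleCat.{0} R) (n : ℕ) :
    extV R M N n ↔ Subsingleton (Abelian.Ext M N n) := by
  cases n with
  | zero => rw [extV_zero_iff_subsingleton_hom, Abelian.Ext.homEquiv₀.subsingleton_congr]
  | succ n =>
    let P := projectiveResolution M
    rw [extV_iff_of_projectiveResolution N P]
    refine ⟨fun h => subsingleton_of_forall_eq 0 fun e => ?_, fun h f hf => ?_⟩
    · obtain ⟨f, hf, rfl⟩ := P.extMk_surjective e (n + 2) rfl
      exact (P.extMk_eq_zero_iff f (n + 2) rfl hf n rfl).2 (h f hf)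
    · exact (P.extMk_eq_zero_iff f (n + 2) rfl hf n rfl).1 (Subsingleton.elim _ _)

lemma projDimLE_iff_hasProjectiveDimensionLE (M : ModuleCat.{0} R) (n : ℕ) :
    projDimLE R M n ↔ HasProjectiveDimensionLE M n := by
  simp only [projDimLE, extV_iff_subsingleton_ext, HasProjectiveDimensionLE,
    hasProjectiveDimensionLT_iff]
  exact ⟨fun h i hi N e => (h N i hi).elim e 0,
    fun h N i hi => subsingleton_of_forall_eq 0 fun e => h i hi e⟩

lemma injDimLE_iff_hasInjectiveDimensionLE (N : ModuleCat.{0} R) (n : ℕ) :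
    injDimLE R N n ↔ HasInjectiveDimensionLE N n := by
  simp only [injDimLE, extV_iff_subsingleton_ext, HasInjectiveDimensionLE,
    hasInjectiveDimensionLT_iff]
  exact ⟨fun h i hi N e => (h N i hi).elim e 0,
    fun h N i hi => subsingleton_of_forall_eq 0 fun e => h i hi e⟩

lemma extV_pi (M : ModuleCat.{0} R) {ι : Type} {N : ι → Type} [∀ i, AddCommGroup (N i)]
    [∀ i, Module R (N i)] {n : ℕ} (h : ∀ i, extV R M (ModuleCat.of R (N i)) n) :
    extV R M (ModuleCat.of R (∀ i, N i)) n := by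
  simp only [extV_iff_of_projectiveResolution _ (projectiveResolution M)] at h ⊢
  intro f hf
  have hcomponent (i : ι) := h i (f ≫ ModuleCat.ofHom (LinearMap.proj i)) (by
    rw [← Category.assoc, hf, Limits.zero_comp])
  choose g hg using hcomponent
  refine ⟨ModuleCat.ofHom (LinearMap.pi fun i => (g i).hom), ?_⟩
  ext y i
  exact LinearMap.congr_fun (congrArg ModuleCat.Hom.hom (hg i)) y

lemma extV_of_shortExact (M : ModuleCat.{0} R) {S : ShortComplex (ModuleCat.{0} R)}
    (hS : S.ShortExact) {n : ℕ} (h₂ : extV R M S.X₂ n) (h₁ : extV R M S.X₁ (n + 1)) :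
    extV R M S.X₃ n := by
  rw [extV_iff_subsingleton_ext] at *
  refine subsingleton_of_forall_eq 0 fun e => ?_
  obtain ⟨e', rfl⟩ := Abelian.Ext.covariant_sequence_exact₃ M hS e rfl (Subsingleton.elim _ _)
  rw [Subsingleton.elim e' 0, Abelian.Ext.zero_comp]

lemma projective_moduleCat_of (M : Type) [AddCommGroup M] [Module R M] [Module.Projective R M] :
    Projective (ModuleCat.of R M) :=
  (IsProjective.iff_projective M).1 inferInstance

lemma eq_zero_of_extV_quotient_zero {R : Type} [CommRing R] {J : Ideal R} {M : Type}
    [AddCommGroup M] [Module R M]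
    (h : extV R (ModuleCat.of R (R ⧸ J)) (ModuleCat.of R M) 0) {m : M}
    (hm : ∀ a ∈ J, a • m = 0) : m = 0 := by
  rw [extV_zero_iff_subsingleton_hom] at h
  let φ : (R ⧸ J) →ₗ[R] M := J.liftQ (LinearMap.toSpanSingleton R M m) hm
  have hφ : φ = 0 := congrArg ModuleCat.Hom.hom (h.elim (ModuleCat.ofHom φ) 0)
  exact (one_smul R m).symm.trans (LinearMap.congr_fun hφ (Submodule.Quotient.mk 1))

end

namespace KosCoker

variable {A : Type} [CommRing A] {ℓ : ℕ} {x : Fin ℓ → A}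

lemma shortExact (i : ℕ) (hd : Function.Injective (d x i)) :
    (ShortComplex.moduleCatMk (d x i) (mk x (i + 1))
      (exact_d_mk x i).linearMap_comp_eq_zero).ShortExact :=
  ModuleCat.shortComplex_shortExact _ (exact_d_mk x i) hd (mk_surjective x (i + 1))

lemma d_injective_of_extV_zero {i : ℕ}
    (h : extV A (ModuleCat.of A (A ⧸ Ideal.span (Set.range x)))
      (ModuleCat.of A (KosCoker A x i)) 0) :
    Function.Injective (d x i) :=
  (injective_iff_map_eq_zero _).2 fun _ hs =>
    eq_zero_of_extV_quotient_zero h fun _ ha => smul_eq_zero_of_d_eq_zero hs ha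

lemma extV_quotient {k : ℕ}
    (hgrade : ∀ j < k, extV A (ModuleCat.of A (A ⧸ Ideal.span (Set.range x))) (ModuleCat.of A A) j)
    (i : ℕ) : ∀ j, j + i < k → extV A (ModuleCat.of A (A ⧸ Ideal.span (Set.range x)))
      (ModuleCat.of A (KosCoker A x i)) j := by
  induction i with
  | zero => exact hgrade
  | succ i ih =>
    exact fun j hj => extV_of_shortExact _ (shortExact i (d_injective_of_extV_zero (ih 0 (by lia))))
      (extV_pi _ fun _ => hgrade j (by lia)) (ih (j + 1) (by lia))

lemma d_injective {k : ℕ}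
    (hgrade : ∀ j < k, extV A (ModuleCat.of A (A ⧸ Ideal.span (Set.range x))) (ModuleCat.of A A) j)
    {i : ℕ} (hi : i < k) : Function.Injective (d x i) :=
  d_injective_of_extV_zero (extV_quotient hgrade i 0 (by lia))

lemma hasProjectiveDimensionLE_succ_iff {i : ℕ} (n : ℕ) (hd : Function.Injective (d x i)) :
    HasProjectiveDimensionLE (ModuleCat.of A (KosCoker A x (i + 1))) (n + 1) ↔
      HasProjectiveDimensionLE (ModuleCat.of A (KosCoker A x i)) n :=
  (shortExact i hd).hasProjectiveDimensionLT_X₃_iff n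
    (projective_moduleCat_of (KosTerm A ℓ (i + 1)))

end KosCoker

section
variable {R : Type} [CommRing R]

lemma exact_characterModule_dual {X Y Z : Type*} [AddCommGroup X] [Module R X] [AddCommGroup Y]
    [Module R Y] [AddCommGroup Z] [Module R Z] {f : X →ₗ[R] Y} {g : Y →ₗ[R] Z}
    (hfg : Function.Exact f g) (hg : Function.Surjective g) :
    Function.Exact (CharacterModule.dual g) (CharacterModule.dual f) := by
  intro c
  refine ⟨fun hc => ?_, ?_⟩
  · have hker : g.toAddMonoidHom.ker ≤ AddMonoidHom.ker c := fun y hy => by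
      obtain ⟨u, rfl⟩ := (hfg y).1 hy
      exact DFunLike.congr_fun hc u
    exact ⟨g.toAddMonoidHom.liftOfSurjective hg ⟨c, hker⟩,
      g.toAddMonoidHom.liftOfRightInverse_comp _ _ ⟨c, hker⟩⟩
  · rintro ⟨c, rfl⟩
    rw [← LinearMap.comp_apply, ← CharacterModule.dual_comp, hfg.linearMap_comp_eq_zero,
      CharacterModule.dual_zero, LinearMap.zero_apply]

lemma shortExact_characterModule_dual {X Y Z : Type} [AddCommGroup X] [Module R X]
    [AddCommGroup Y] [Module R Y] [AddCommGroup Z] [Module R Z] {f : X →ₗ[R] Y} {g : Y →ₗ[R] Z}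
    (hf : Function.Injective f) (hfg : Function.Exact f g) (hg : Function.Surjective g) :
    (ShortComplex.moduleCatMk (CharacterModule.dual g) (CharacterModule.dual f)
      (exact_characterModule_dual hfg hg).linearMap_comp_eq_zero).ShortExact :=
  ModuleCat.shortComplex_shortExact _ (exact_characterModule_dual hfg hg)
    (CharacterModule.dual_injective_of_surjective _ hg)
    (CharacterModule.dual_surjective_of_injective _ hf)

lemma flat_iff_injective_characterModule (M : Type) [AddCommGroup M] [Module R M] :
    Module.Flat R M ↔ Injective (ModuleCat.of R (CharacterModule M)) :=
  Module.Flat.iff_characterModule_injective.trans (Module.injective_iff_injective_object R _)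

lemma one_tmul_eq_zero_iff {I : Ideal R} {M : Type*} [AddCommGroup M] [Module R M] {m : M} :
    (1 : R ⧸ I) ⊗ₜ[R] m = 0 ↔ m ∈ I • (⊤ : Submodule R M) := by
  rw [← (TensorProduct.quotTensorEquivQuotSMul M I).map_eq_zero_iff,
    ← map_one (Ideal.Quotient.mk I), TensorProduct.quotTensorEquivQuotSMul_mk_tmul, one_smul,
    Submodule.Quotient.mk_eq_zero]

lemma mem_smul_top_of_exact_of_flat {X Y Z : Type*} [AddCommGroup X] [Module R X] [AddCommGroup Y]
    [Module R Y] [AddCommGroup Z] [Module R Z] [Module.Flat R Z] {f : X →ₗ[R] Y} {g : Y →ₗ[R] Z}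
    (hf : Function.Injective f) (hfg : Function.Exact f g) (hg : Function.Surjective g)
    {I : Ideal R} {m : X} (hm : f m ∈ I • (⊤ : Submodule R Y)) : m ∈ I • (⊤ : Submodule R X) := by
  have hinj := LinearMap.lTensor_injective_of_exact_of_flat g hg f hf hfg (R ⧸ I)
  rw [← one_tmul_eq_zero_iff, ← (injective_iff_map_eq_zero' _).1 hinj, LinearMap.lTensor_tmul,
    one_tmul_eq_zero_iff]
  exact hm

end

namespace KosCoker

variable {R A : Type} [CommRing R] [CommRing A] [Algebra R A] {ℓ : ℕ} {x : Fin ℓ → A}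

instance (i : ℕ) : IsScalarTower R A (KosCoker A x i) :=
  IsScalarTower.of_algebraMap_smul fun _ _ => rfl

lemma d_apply_mem_smul_top (i : ℕ) (s : KosCoker A x i) :
    d x i s ∈ Ideal.span (Set.range x) • (⊤ : Submodule A (KosTerm A ℓ (i + 1))) := by
  rw [pi_eq_sum_univ' (d x i s)]
  exact Submodule.sum_mem _ fun T _ =>
    Submodule.smul_mem_smul (d_apply_mem x i s T) Submodule.mem_top

lemma not_flat_one {I : Ideal R} (hx : Ideal.span (Set.range x) = I.map (algebraMap R A))
    (hI : I.map (algebraMap R A) ≠ ⊤) (hd : Function.Injective (d x 0)) :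
    ¬ Module.Flat R (KosCoker A x 1) := by
  intro _
  have htop (M : Type) [AddCommGroup M] [Module A M] [Module R M] [IsScalarTower R A M] (m : M) :
      m ∈ I • (⊤ : Submodule R M) ↔ m ∈ I.map (algebraMap R A) • (⊤ : Submodule A M) := by
    rw [← Submodule.restrictScalars_top R A M, ← Ideal.smul_restrictScalars,
      Submodule.restrictScalars_mem]
  have hmem (s : KosCoker A x 0) :
      s ∈ I.map (algebraMap R A) • (⊤ : Submodule A (KosCoker A x 0)) := by
    rw [← htop]
    refine mem_smul_top_of_exact_of_flat (f := (d x 0).restrictScalars R)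
      (g := (mk x 1).restrictScalars R) hd (exact_d_mk x 0) (mk_surjective x 1) ?_
    rw [htop, ← hx]
    exact d_apply_mem_smul_top 0 s
  have hone : (1 : A) ∈ I.map (algebraMap R A) • (⊤ : Ideal A) := hmem (1 : A)
  rw [smul_eq_mul, Ideal.mul_top] at hone
  exact hI ((Ideal.eq_top_iff_one _).2 hone)

lemma flat_zero [Module.Flat R A] : Module.Flat R (KosCoker A x 0) :=
  have : Module.Flat A (KosCoker A x 0) := inferInstanceAs (Module.Flat A A)
  Module.Flat.trans R A _

lemma hasInjectiveDimensionLE_characterModule_succ_iff [Module.Flat R A] {i : ℕ} (n : ℕ)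
    (hd : Function.Injective (d x i)) :
    HasInjectiveDimensionLE (ModuleCat.of R (CharacterModule (KosCoker A x (i + 1)))) (n + 1) ↔
      HasInjectiveDimensionLE (ModuleCat.of R (CharacterModule (KosCoker A x i))) n := by
  have hdual := shortExact_characterModule_dual (f := (d x i).restrictScalars R)
    (g := (mk x (i + 1)).restrictScalars R) hd (exact_d_mk x i) (mk_surjective x (i + 1))
  have hflat : Module.Flat R (KosTerm A ℓ (i + 1)) := Module.Flat.trans R A _
  exact (hdual.hasInjectiveDimensionLT_X₃_iff n
    ((flat_iff_injective_characterModule _).1 hflat)).symm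

lemma injDimLE_characterModule [Module.Flat R A] {k : ℕ}
    (hd : ∀ i < k, Function.Injective (d x i)) :
    injDimLE R (ModuleCat.of R (CharacterModule (KosCoker A x k))) k := by
  rw [injDimLE_iff_hasInjectiveDimensionLE]
  induction k with
  | zero =>
    exact injective_iff_hasInjectiveDimensionLT_one.1
      ((flat_iff_injective_characterModule _).1 flat_zero)
  | succ k ih =>
    exact (hasInjectiveDimensionLE_characterModule_succ_iff k (hd k k.lt_succ_self)).2
      (ih fun i hi => hd i (by lia))

lemma not_injDimLE_characterModule [Module.Flat R A] {I : Ideal R}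
    (hx : Ideal.span (Set.range x) = I.map (algebraMap R A))
    (hI : I.map (algebraMap R A) ≠ ⊤) {k : ℕ} (hd : ∀ i < k + 1, Function.Injective (d x i)) :
    ¬ injDimLE R (ModuleCat.of R (CharacterModule (KosCoker A x (k + 1)))) k := by
  rw [injDimLE_iff_hasInjectiveDimensionLE]
  induction k with
  | zero =>
    rw [HasInjectiveDimensionLE, ← injective_iff_hasInjectiveDimensionLT_one,
      ← flat_iff_injective_characterModule]
    exact not_flat_one hx hI (hd 0 one_pos)
  | succ k ih =>
    rw [hasInjectiveDimensionLE_characterModule_succ_iff k (hd (k + 1) (by lia))]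
    exact ih fun i hi => hd i (by lia)

lemma projDimLE_of_injective_d {k : ℕ} (hd : ∀ i < k, Function.Injective (d x i)) :
    projDimLE A (ModuleCat.of A (KosCoker A x k)) k := by
  rw [projDimLE_iff_hasProjectiveDimensionLE]
  induction k with
  | zero =>
    have : Module.Projective A (KosCoker A x 0) := inferInstanceAs (Module.Projective A A)
    exact projective_iff_hasProjectiveDimensionLT_one.1 (projective_moduleCat_of _)
  | succ k ih =>
    exact (hasProjectiveDimensionLE_succ_iff k (hd k k.lt_succ_self)).2
      (ih fun i hi => hd i (by lia))

lemma not_projDimLE (hx : Ideal.span (Set.range x) ≠ ⊤) {k : ℕ}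
    (hd : ∀ i < k + 1, Function.Injective (d x i)) :
    ¬ projDimLE A (ModuleCat.of A (KosCoker A x (k + 1))) k := by
  rw [projDimLE_iff_hasProjectiveDimensionLE]
  induction k with
  | zero =>
    rw [HasProjectiveDimensionLE, ← projective_iff_hasProjectiveDimensionLT_one,
      ← IsProjective.iff_projective]
    exact fun _ => not_flat_one (R := A) (Ideal.map_id _).symm ((Ideal.map_id _).trans_ne hx)
      (hd 0 one_pos) Module.Flat.of_projective
  | succ k ih =>
    rw [hasProjectiveDimensionLE_succ_iff k (hd (k + 1) (by lia))]
    exact ih fun i hi => hd i (by lia)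

end KosCoker

/-! ### Duals turning Tor into Ext -/

section
variable {R : Type} [CommRing R]

lemma torV_iff_of_projectiveResolution (S : ModuleCat.{0} R) {M : ModuleCat.{0} R}
    (P : ProjectiveResolution M) (n : ℕ) :
    torV R S M n ↔ Function.Exact (LinearMap.lTensor S (P.complex.d (n + 1) n).hom)
      (LinearMap.lTensor S (P.complex.d n (n - 1)).hom) := by
  unfold torV
  dsimp only [Tor]
  rw [← ModuleCat.isZero_iff_subsingleton, (P.isoLeftDerivedObj _ n).isZero_iff]
  dsimp only [HomologicalComplex.homologyFunctor]
  rw [← HomologicalComplex.exactAt_iff_isZero_homology,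
    HomologicalComplex.exactAt_iff' _ (n + 1) n (n - 1) (by simp) (by cases n <;> simp),
    ShortComplex.ShortExact.moduleCat_exact_iff_function_exact]
  rfl

/-- `N` is an exact dual of `S` if the functors `S ⊗ -` and `Hom(-, N)` have the same exact
sequences; this is the common property of the character dual and the Matlis dual of `S` which turns
`Tor(S, -)` into `Ext(-, N)`. -/
def IsExactDual (R S N : Type) [CommRing R] [AddCommGroup S] [Module R S]
    [AddCommGroup N] [Module R N] : Prop :=
  ∀ ⦃X Y Z : Type⦄ [AddCommGroup X] [Module R X] [AddCommGroup Y] [Module R Y]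
    [AddCommGroup Z] [Module R Z] (f : X →ₗ[R] Y) (g : Y →ₗ[R] Z),
    Function.Exact (f.lTensor S) (g.lTensor S) ↔
      Function.Exact (LinearMap.lcomp R N g) (LinearMap.lcomp R N f)

namespace IsExactDual

variable {S N : Type} [AddCommGroup S] [Module R S] [AddCommGroup N] [Module R N]

lemma congr (h : IsExactDual R S N) {N' : Type} [AddCommGroup N'] [Module R N']
    (e : N ≃ₗ[R] N') : IsExactDual R S N' := fun _ _ _ _ _ _ _ _ _ f g =>
  (h f g).trans <| (Function.Exact.iff_of_ladder_linearEquiv (e₁ := e.congrRight)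
    (e₂ := e.congrRight) (e₃ := e.congrRight) rfl rfl).symm

lemma torV_iff_extV (h : IsExactDual R S N) (M : ModuleCat.{0} R) (n : ℕ) :
    torV R (ModuleCat.of R S) M n ↔ extV R M (ModuleCat.of R N) n := by
  let P := projectiveResolution M
  have hcomp : (P.complex.d n (n - 1)).hom ∘ₗ (P.complex.d (n + 1) n).hom = 0 :=
    congrArg ModuleCat.Hom.hom (P.complex.d_comp_d (n + 1) n (n - 1))
  rw [torV_iff_of_projectiveResolution _ P, extV_iff_of_projectiveResolution _ P]
  refine (h _ _).trans ⟨fun hexact f hf => ?_, fun hlift => ?_⟩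
  · obtain ⟨g, hg⟩ := (hexact f.hom).1 (congrArg ModuleCat.Hom.hom hf)
    exact ⟨ModuleCat.ofHom g, ModuleCat.hom_ext hg⟩
  · refine LinearMap.exact_of_comp_of_mem_range ?_ fun φ hφ => ?_
    · exact LinearMap.ext fun φ => (congrArg φ.comp hcomp).trans (LinearMap.comp_zero φ)
    · obtain ⟨g, hg⟩ := hlift (ModuleCat.ofHom φ) (ModuleCat.hom_ext hφ)
      exact ⟨g.hom, congrArg ModuleCat.Hom.hom hg⟩

lemma flatDimLE_iff_injDimLE (h : IsExactDual R S N) (n : ℕ) :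
    flatDimLE R (ModuleCat.of R S) n ↔ injDimLE R (ModuleCat.of R N) n :=
  forall_congr' fun M => forall₂_congr fun j _ => h.torV_iff_extV M j

lemma torOrthogonal_eq (h : IsExactDual R S N) :
    {M : ModuleCat.{0} R | ∀ j : ℕ, 1 ≤ j → torV R (ModuleCat.of R S) M j} =
      {M : ModuleCat.{0} R | ∀ j : ℕ, 1 ≤ j → extV R M (ModuleCat.of R N) j} :=
  Set.ext fun M => forall₂_congr fun j _ => h.torV_iff_extV M j

lemma pureInjective (h : IsExactDual R S N) : PureInjective R N := by
  intro X Y _ _ _ _ f hf g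
  have hexact := (h (0 : PUnit →ₗ[R] X) f).1 <| by
    rw [LinearMap.lTensor_zero, LinearMap.exact_zero_iff_injective]
    exact hf.2 S
  exact (hexact g).1 (LinearMap.comp_zero g)

end IsExactDual
end

/-- `E` is an injective cogenerator of the category of `A`-modules. -/
structure IsInjectiveCogenerator (A E : Type) [CommRing A] [AddCommGroup E] [Module A E] :
    Prop where
  injective : Module.Injective A E
  exists_apply_ne_zero : ∀ {V : Type} [AddCommGroup V] [Module A V] {v : V}, v ≠ 0 →
    ∃ c : V →ₗ[A] E, c v ≠ 0

section
variable {A E : Type} [CommRing A] [AddCommGroup E] [Module A E]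

lemma exists_comp_eq_of_ker_le_ker [Module.Injective A E] {V W : Type} [AddCommGroup V]
    [Module A V] [AddCommGroup W] [Module A W] {g : V →ₗ[A] W} {c : V →ₗ[A] E}
    (h : LinearMap.ker g ≤ LinearMap.ker c) : ∃ c' : W →ₗ[A] E, c' ∘ₗ g = c := by
  obtain ⟨c', hc'⟩ := Module.Injective.extension_property A _ _ _
    ((LinearMap.ker g).liftQ g le_rfl)
    (LinearMap.ker_eq_bot.1 (Submodule.ker_liftQ_eq_bot' _ _ rfl))
    ((LinearMap.ker g).liftQ c h)
  refine ⟨c', ?_⟩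
  rw [← (LinearMap.ker g).liftQ_mkQ c h, ← hc', LinearMap.comp_assoc, Submodule.liftQ_mkQ]

namespace IsInjectiveCogenerator

lemma comp_eq_zero (hE : IsInjectiveCogenerator A E) {V W : Type} [AddCommGroup V] [Module A V]
    [AddCommGroup W] [Module A W] {h : V →ₗ[A] W} (hc : ∀ c : W →ₗ[A] E, c ∘ₗ h = 0) : h = 0 := by
  by_contra! hne
  obtain ⟨v, hv⟩ := DFunLike.ne_iff.1 hne
  obtain ⟨c, hcv⟩ := hE.exists_apply_ne_zero hv
  exact hcv (LinearMap.congr_fun (hc c) v)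

lemma exact_iff_exact_lcomp (hE : IsInjectiveCogenerator A E)
    {U V W : Type} [AddCommGroup U] [Module A U] [AddCommGroup V] [Module A V]
    [AddCommGroup W] [Module A W] (f : U →ₗ[A] V) (g : V →ₗ[A] W) :
    Function.Exact f g ↔ Function.Exact (LinearMap.lcomp A E g) (LinearMap.lcomp A E f) := by
  have := hE.injective
  refine ⟨fun hfg => ?_, fun hgf => ?_⟩
  · refine LinearMap.exact_of_comp_of_mem_range ?_ fun c hc => ?_
    · exact LinearMap.ext fun c =>
        (congrArg c.comp hfg.linearMap_comp_eq_zero).trans (LinearMap.comp_zero c)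
    · exact exists_comp_eq_of_ker_le_ker
        (hfg.linearMap_ker_eq.trans_le (LinearMap.range_le_ker_iff.2 hc))
  · refine LinearMap.exact_of_comp_of_mem_range ?_ fun v hv => ?_
    · exact hE.comp_eq_zero fun c => LinearMap.congr_fun hgf.linearMap_comp_eq_zero c
    · by_contra hv'
      obtain ⟨c, hc⟩ := hE.exists_apply_ne_zero
        (mt (Submodule.Quotient.mk_eq_zero (LinearMap.range f)).1 hv')
      obtain ⟨c', hc'⟩ := (hgf (c ∘ₗ (LinearMap.range f).mkQ)).1
        ((congrArg c.comp (LinearMap.range_mkQ_comp f)).trans (LinearMap.comp_zero c))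
      have hcv : c' (g v) = c (Submodule.Quotient.mk v) := LinearMap.congr_fun hc' v
      rw [hv, map_zero] at hcv
      exact hc hcv.symm

lemma isExactDual (hE : IsInjectiveCogenerator A E) {R : Type} [CommRing R] [Algebra R A]
    [Module R E] [IsScalarTower R A E] (S : Type) [AddCommGroup S] [Module A S] [Module R S]
    [IsScalarTower R A S] : IsExactDual R S (S →ₗ[A] E) := by
  intro X Y Z _ _ _ _ _ _ f g
  let adj (X : Type) [AddCommGroup X] [Module R X] :
      (X →ₗ[R] S →ₗ[A] E) ≃ₗ[R] (TensorProduct R S X →ₗ[A] E) :=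
    LinearMap.lflip ≪≫ₗ TensorProduct.AlgebraTensorModule.lift.equiv R A R S X E
  let dualTensor {X Y : Type} [AddCommGroup X] [Module R X] [AddCommGroup Y] [Module R Y]
      (f : X →ₗ[R] Y) : (TensorProduct R S Y →ₗ[A] E) →ₗ[R] (TensorProduct R S X →ₗ[A] E) :=
    (LinearMap.lcomp A E (TensorProduct.AlgebraTensorModule.lTensor A S f)).restrictScalars R
  have hadj {X Y : Type} [AddCommGroup X] [Module R X] [AddCommGroup Y] [Module R Y]
      (f : X →ₗ[R] Y) :
      dualTensor f ∘ₗ (adj Y).toLinearMap =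
        (adj X).toLinearMap ∘ₗ LinearMap.lcomp R (S →ₗ[A] E) f :=
    LinearMap.ext fun _ => TensorProduct.AlgebraTensorModule.ext fun _ _ => rfl
  calc Function.Exact (f.lTensor S) (g.lTensor S)
    _ ↔ Function.Exact (dualTensor g) (dualTensor f) := hE.exact_iff_exact_lcomp
        (TensorProduct.AlgebraTensorModule.lTensor A S f)
        (TensorProduct.AlgebraTensorModule.lTensor A S g)
    _ ↔ _ := Function.Exact.iff_of_ladder_linearEquiv (hadj g) (hadj f)

end IsInjectiveCogenerator
end

/-- Maps into `R^+` are characters, by evaluation at `1`. -/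
def homCharacterModuleEquiv (R M : Type*) [CommRing R] [AddCommGroup M] [Module R M] :
    (M →ₗ[R] CharacterModule R) ≃ₗ[R] CharacterModule M :=
  CharacterModule.homEquiv.trans (CharacterModule.congr (TensorProduct.rid R M))

section
variable {R : Type} [CommRing R]

lemma isInjectiveCogenerator_characterModule : IsInjectiveCogenerator R (CharacterModule R) where
  injective := Module.Flat.iff_characterModule_injective.1 inferInstance
  exists_apply_ne_zero {V} _ _ v hv := by
    obtain ⟨χ, hχ⟩ := CharacterModule.exists_character_apply_ne_zero_of_ne_zero hv
    refine ⟨(homCharacterModuleEquiv R V).symm χ, fun hzero => hχ ?_⟩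
    have hone : (homCharacterModuleEquiv R V).symm χ v (1 : R) = χ ((1 : R) • v) := rfl
    rw [hzero, one_smul] at hone
    exact hone.symm

lemma isExactDual_characterModule (S : Type) [AddCommGroup S] [Module R S] :
    IsExactDual R S (CharacterModule S) :=
  (isInjectiveCogenerator_characterModule.isExactDual S).congr (homCharacterModuleEquiv R S)

end

section
variable {A : Type} [CommRing A] [IsLocalRing A]

lemma IsInjectiveCogenerator.of_injective_residueField {E : Type} [AddCommGroup E] [Module A E]
    (hE : Module.Injective A E) {e : IsLocalRing.ResidueField A →ₗ[A] E}
    (he : Function.Injective e) : IsInjectiveCogenerator A E where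
  injective := hE
  exists_apply_ne_zero {V} _ _ v hv := by
    let res : A →ₗ[A] IsLocalRing.ResidueField A := Algebra.linearMap A _
    have hker : LinearMap.ker (LinearMap.toSpanSingleton A V v) ≤ LinearMap.ker (e ∘ₗ res) := by
      have hle : LinearMap.ker (LinearMap.toSpanSingleton A V v) ≤ IsLocalRing.maximalIdeal A :=
        IsLocalRing.le_maximalIdeal fun htop => hv <|
          (one_smul A v).symm.trans ((Ideal.eq_top_iff_one _).1 htop)
      rw [LinearMap.ker_comp_of_ker_eq_bot _ (LinearMap.ker_eq_bot.2 he)]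
      exact fun a ha => (IsLocalRing.residue_eq_zero_iff a).2 (hle ha)
    obtain ⟨c, hc⟩ := exists_comp_eq_of_ker_le_ker hker
    refine ⟨c, fun hcv => one_ne_zero (he ?_)⟩
    have hone : c ((1 : A) • v) = e 1 := LinearMap.congr_fun hc 1
    rw [← hone, one_smul, hcv, map_zero]

lemma extV_quotient_of_lt_rdepth {J : Ideal A} (hJ : J = IsLocalRing.maximalIdeal A) {M : Type}
    [AddCommGroup M] [Module A M] {j : ℕ} (hj : (j : ℕ∞) < rdepth A M) :
    extV A (ModuleCat.of A (A ⧸ J)) (ModuleCat.of A M) j := by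
  subst hJ
  by_contra hext
  exact hj.not_ge (sInf_le ⟨j, rfl, hext⟩)

end

theorem stmt7_general {R A : Type} [CommRing R] [CommRing A] [Algebra R A] [Module.Flat R A]
    {I : Ideal R} (hI : I.map (algebraMap R A) ≠ ⊤) {ℓ : ℕ} {x : Fin ℓ → A}
    (hx : Ideal.span (Set.range x) = I.map (algebraMap R A)) {k : ℕ} (hk : 0 < k)
    (hgrade : ∀ j < k,
      extV A (ModuleCat.of A (A ⧸ Ideal.span (Set.range x))) (ModuleCat.of A A) j) :
    (flatDimLE R (ModuleCat.of R (KosCoker A x k)) k ∧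
      ¬ flatDimLE R (ModuleCat.of R (KosCoker A x k)) (k - 1) ∧
      projDimLE A (ModuleCat.of A (KosCoker A x k)) k ∧
      ¬ projDimLE A (ModuleCat.of A (KosCoker A x k)) (k - 1)) ∧
    (PureInjective R (CharacterModule (KosCoker A x k)) ∧
      injDimLE R (ModuleCat.of R (CharacterModule (KosCoker A x k))) k ∧
      ¬ injDimLE R (ModuleCat.of R (CharacterModule (KosCoker A x k))) (k - 1) ∧
      {M : ModuleCat.{0} R | ∀ j : ℕ, 1 ≤ j → torV R (ModuleCat.of R (KosCoker A x k)) M j} =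
        {M : ModuleCat.{0} R | ∀ j : ℕ, 1 ≤ j →
          extV R M (ModuleCat.of R (CharacterModule (KosCoker A x k))) j}) ∧
    (∀ (E : Type) [AddCommGroup E] [Module A E] [Module R E] [IsScalarTower R A E],
      IsInjectiveCogenerator A E →
      PureInjective R (KosCoker A x k →ₗ[A] E) ∧
      injDimLE R (ModuleCat.of R (KosCoker A x k →ₗ[A] E)) k ∧
      ¬ injDimLE R (ModuleCat.of R (KosCoker A x k →ₗ[A] E)) (k - 1) ∧
      {M : ModuleCat.{0} R | ∀ j : ℕ, 1 ≤ j → torV R (ModuleCat.of R (KosCoker A x k)) M j} =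
        {M : ModuleCat.{0} R | ∀ j : ℕ, 1 ≤ j →
          extV R M (ModuleCat.of R (KosCoker A x k →ₗ[A] E)) j}) := by
  obtain ⟨k, rfl⟩ := Nat.exists_eq_add_one.2 hk
  have hd : ∀ i < k + 1, Function.Injective (KosCoker.d x i) :=
    fun i hi => KosCoker.d_injective hgrade hi
  have hchar := isExactDual_characterModule (R := R) (KosCoker A x (k + 1))
  have hflat := (hchar.flatDimLE_iff_injDimLE (k + 1)).2 (KosCoker.injDimLE_characterModule hd)
  have hnflat : ¬ flatDimLE R (ModuleCat.of R (KosCoker A x (k + 1))) k :=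
    (hchar.flatDimLE_iff_injDimLE k).not.2 (KosCoker.not_injDimLE_characterModule hx hI hd)
  have hdual {N : Type} [AddCommGroup N] [Module R N]
      (h : IsExactDual R (KosCoker A x (k + 1)) N) :=
    And.intro h.pureInjective <| And.intro ((h.flatDimLE_iff_injDimLE _).1 hflat) <|
      And.intro ((h.flatDimLE_iff_injDimLE _).not.1 hnflat) h.torOrthogonal_eq
  exact ⟨⟨hflat, hnflat, KosCoker.projDimLE_of_injective_d hd,
    KosCoker.not_projDimLE (hx.trans_ne hI) hd⟩, hdual hchar,
    fun E _ _ _ _ hE => hdual (hE.isExactDual _)⟩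

/-- for a prime `p` of a commutative noetherian ring `R` and
`0 < k ≤ depth(R_p)`, the Koszul cocycle module `S_k(pR_p; R_p)` (defined using any
finite generating set of `pR_p`) has flat dimension exactly `k` over `R` and projective
dimension exactly `k` over `R_p`; its character dual and its Matlis dual are pure-injective
of injective dimension exactly `k`, and the Tor-orthogonal of `S_k(pR_p; R_p)` coincides
with the Ext-left-orthogonals of these duals. -/
theorem stmt7 (R : Type) [CommRing R] [IsNoetherianRing R] (p : PrimeSpectrum R)
    (k : ℕ) (hk : 0 < k) (hkd : (k : ℕ∞) ≤ ringDepthAt R p)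
    (ℓ : ℕ) (x : Fin ℓ → Localization.AtPrime p.asIdeal)
    (hx : Ideal.span (Set.range x) =
      Ideal.map (algebraMap R (Localization.AtPrime p.asIdeal)) p.asIdeal) :
    -- (1) flat dimension exactly k over R, projective dimension exactly k over R_p
    (flatDimLE R (ModuleCat.of R (KosCoker (Localization.AtPrime p.asIdeal) x k)) k ∧
     ¬ flatDimLE R (ModuleCat.of R (KosCoker (Localization.AtPrime p.asIdeal) x k)) (k - 1) ∧
     projDimLE (Localization.AtPrime p.asIdeal)
       (ModuleCat.of (Localization.AtPrime p.asIdeal)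
         (KosCoker (Localization.AtPrime p.asIdeal) x k)) k ∧
     ¬ projDimLE (Localization.AtPrime p.asIdeal)
       (ModuleCat.of (Localization.AtPrime p.asIdeal)
         (KosCoker (Localization.AtPrime p.asIdeal) x k)) (k - 1)) ∧
    -- (2) the character dual is pure-injective of injective dimension exactly k,
    -- and the Tor-orthogonal of S_k equals the Ext-left-orthogonal of the dual
    (PureInjective R (CharacterModule (KosCoker (Localization.AtPrime p.asIdeal) x k)) ∧
     injDimLE R (ModuleCat.of R
       (CharacterModule (KosCoker (Localization.AtPrime p.asIdeal) x k))) k ∧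
     ¬ injDimLE R (ModuleCat.of R
       (CharacterModule (KosCoker (Localization.AtPrime p.asIdeal) x k))) (k - 1) ∧
     {M : ModuleCat.{0} R | ∀ j : ℕ, 1 ≤ j →
        torV R (ModuleCat.of R (KosCoker (Localization.AtPrime p.asIdeal) x k)) M j} =
      {M : ModuleCat.{0} R | ∀ j : ℕ, 1 ≤ j →
        extV R M (ModuleCat.of R
          (CharacterModule (KosCoker (Localization.AtPrime p.asIdeal) x k))) j}) ∧
    -- (2') the same statements for the Matlis dual,
    -- for any injective envelope E of the residue field of R_p
    (∀ (E : Type) (_ : AddCommGroup E) (_ : Module (Localization.AtPrime p.asIdeal) E)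
      (e : IsLocalRing.ResidueField (Localization.AtPrime p.asIdeal) →ₗ[Localization.AtPrime p.asIdeal] E),
      IsInjectiveEnvelope (Localization.AtPrime p.asIdeal) e →
      (PureInjective R (RestrictScalars R (Localization.AtPrime p.asIdeal)
         ((KosCoker (Localization.AtPrime p.asIdeal) x k) →ₗ[Localization.AtPrime p.asIdeal] E)) ∧
       injDimLE R (ModuleCat.of R (RestrictScalars R (Localization.AtPrime p.asIdeal)
         ((KosCoker (Localization.AtPrime p.asIdeal) x k) →ₗ[Localization.AtPrime p.asIdeal] E))) k ∧
       ¬ injDimLE R (ModuleCat.of R (RestrictScalars R (Localization.AtPrime p.asIdeal)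
         ((KosCoker (Localization.AtPrime p.asIdeal) x k) →ₗ[Localization.AtPrime p.asIdeal] E))) (k - 1) ∧
       {M : ModuleCat.{0} R | ∀ j : ℕ, 1 ≤ j →
          torV R (ModuleCat.of R (KosCoker (Localization.AtPrime p.asIdeal) x k)) M j} =
        {M : ModuleCat.{0} R | ∀ j : ℕ, 1 ≤ j →
          extV R M (ModuleCat.of R (RestrictScalars R (Localization.AtPrime p.asIdeal)
            ((KosCoker (Localization.AtPrime p.asIdeal) x k) →ₗ[Localization.AtPrime p.asIdeal] E))) j})) := by
  have hmax := Localization.AtPrime.map_eq_maximalIdeal (I := p.asIdeal)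
  obtain ⟨hS, hchar, hmatlis⟩ := stmt7_general (hmax.trans_ne Ideal.IsPrime.ne_top') hx hk
    fun j hj => extV_quotient_of_lt_rdepth (hx.trans hmax) ((Nat.cast_lt.2 hj).trans_le hkd)
  refine ⟨hS, hchar, fun E _ _ e he => ?_⟩
  let _ : Module R E := Module.compHom E (algebraMap R (Localization.AtPrime p.asIdeal))
  have : IsScalarTower R (Localization.AtPrime p.asIdeal) E :=
    IsScalarTower.of_algebraMap_smul fun _ _ => rfl
  exact hmatlis E (.of_injective_residueField he.1 he.2.1)
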